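/- arXiv:2005.07067 — 3 statements merged into one kernel-verified Lean document; each statement's English description precedes it below -/
import Mathlib

section
/- Let K be a positive compact bounded linear operator on L_p(X,π) and let h ∈ L_p(X,π) satisfy h(x) > 0 for π-almost every x. Then the local spectral radius of K at h satisfies ρ(K,h) = lim_{n→∞} ‖K^n h‖_p^{1/n} = ρ(K); in particular this limit exists. -/
open MeasureTheory Filter Topology ENNReal

/-- The spectral radius of a bounded linear operator, via the Gelfand formula
`ρ(K) = lim_n ‖K^n‖^(1/n) = inf_{n ≥ 1} ‖K^n‖^(1/n)`. -/
noncomputable def specRad {E : Type*} [NormedAddCommGroup E] [NormedSpace ℝ E]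
    (K : E →L[ℝ] E) : ℝ := ⨅ n : ℕ, ‖K ^ (n + 1)‖ ^ (1 / (n + 1) : ℝ)

/-- The local spectral radius `ρ(K, h) = limsup_n ‖K^n h‖^(1/n)`. -/
noncomputable def locSpecRad {E : Type*} [NormedAddCommGroup E] [NormedSpace ℝ E]
    (K : E →L[ℝ] E) (h : E) : ℝ :=
  Filter.limsup (fun n : ℕ => ‖(K ^ n) h‖ ^ (1 / n : ℝ)) Filter.atTop

/-!
Since `h > 0` almost everywhere, every element of `Lp` is a limit of functions bounded by multiples
of `h`; as `K` is compact, it therefore maps the unit ball into some `N • [-h, h]` up to an error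
`s`. By positivity, `‖K ^ (n + 1)‖ ≤ N * ‖K ^ n h‖ + s * ‖K ^ n‖` for every `n`. Iterating this `n`
times, starting from `K ^ n`, gives `‖K ^ (2 * n)‖ ≤ D * R ^ n * ‖K ^ n h‖ + s ^ n * ‖K ^ n‖` for
every `R > ρ(K)`. The left side is at least `ρ(K) ^ (2 * n)`, and `‖K ^ n‖` is at most a constant
times `R ^ n`. If `s < ρ(K)` and `R` is so close to `ρ(K)` that `R * s < ρ(K) ^ 2`, this rules out
`‖K ^ n h‖ < s ^ n` for large `n`.
-/

section Sequences

theorem eventually_const_mul_pow_lt_pow (c : ℝ) {a b : ℝ} (ha : 0 ≤ a) (hab : a < b) :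
    ∀ᶠ n : ℕ in atTop, c * a ^ n < b ^ n := by
  have hb : 0 < b := ha.trans_lt hab
  filter_upwards [((isLittleO_pow_pow_of_lt_left ha hab).const_mul_left c).bound one_half_pos]
    with n hn
  rw [Real.norm_of_nonneg (pow_pos hb n).le] at hn
  linarith [Real.le_norm_self (c * a ^ n), pow_pos hb n]

theorem tendsto_rpow_one_div_of_eventually_pow_le {u : ℕ → ℝ} {r : ℝ} (hu : ∀ n, 0 ≤ u n)
    (hr : 0 ≤ r) (lower : ∀ s, 0 < s → s < r → ∀ᶠ n : ℕ in atTop, s ^ n ≤ u n)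
    (upper : ∀ R, r < R → ∀ᶠ n : ℕ in atTop, u n ≤ R ^ n) :
    Tendsto (fun n : ℕ => u n ^ (1 / n : ℝ)) atTop (𝓝 r) := by
  simp only [one_div]
  refine tendsto_order.2 ⟨fun a ha => ?_, fun b hb => ?_⟩
  · rcases lt_or_ge a 0 with ha0 | ha0
    · exact .of_forall fun n => ha0.trans_le (Real.rpow_nonneg (hu n) _)
    · obtain ⟨s, has, hsr⟩ := exists_between ha
      have hs : 0 < s := ha0.trans_lt has
      filter_upwards [lower s hs hsr, eventually_ne_atTop 0] with n hn hn0
      calc a < s := has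
        _ = (s ^ n) ^ (n⁻¹ : ℝ) := (Real.pow_rpow_inv_natCast hs.le hn0).symm
        _ ≤ u n ^ (n⁻¹ : ℝ) := by gcongr
  · obtain ⟨R, hrR, hRb⟩ := exists_between hb
    filter_upwards [upper R hrR, eventually_ne_atTop 0] with n hn hn0
    calc u n ^ (n⁻¹ : ℝ) ≤ (R ^ n) ^ (n⁻¹ : ℝ) := Real.rpow_le_rpow (hu n) hn (by positivity)
      _ = R := Real.pow_rpow_inv_natCast (hr.trans hrR.le) hn0
      _ < b := hRb

theorem exists_norm_pow_le_const_mul_pow {A : Type*} [SeminormedRing A] {a : A} {R : ℝ}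
    (hR : 0 < R) {m : ℕ} (hm : m ≠ 0) (ha : ‖a ^ m‖ ≤ R ^ m) :
    ∃ M, 0 ≤ M ∧ ∀ n : ℕ, ‖a ^ n‖ ≤ M * R ^ n := by
  have hnonneg : ∀ k ∈ Finset.range m, 0 ≤ ‖a ^ k‖ / R ^ k := fun k _ => by positivity
  set M := ∑ k ∈ Finset.range m, ‖a ^ k‖ / R ^ k
  refine ⟨M, Finset.sum_nonneg hnonneg, fun n => ?_⟩
  induction n using Nat.strong_induction_on with
  | _ n ih =>
    rcases lt_or_ge n m with hnm | hmn
    · rw [← div_le_iff₀ (by positivity)]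
      exact Finset.single_le_sum hnonneg (Finset.mem_range.2 hnm)
    · obtain ⟨k, rfl⟩ := Nat.exists_eq_add_of_le hmn
      calc ‖a ^ (m + k)‖ ≤ ‖a ^ m‖ * ‖a ^ k‖ := pow_add a m k ▸ norm_mul_le _ _
        _ ≤ R ^ m * (M * R ^ k) := by gcongr; exact ih k (by lia)
        _ = M * R ^ (m + k) := by ring

end Sequences

section SpectralRadius

variable {E : Type*} [NormedAddCommGroup E] [NormedSpace ℝ E] {K : E →L[ℝ] E} {h : E}

theorem specRad_nonneg (K : E →L[ℝ] E) : 0 ≤ specRad K :=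
  Real.iInf_nonneg fun _ => by positivity

theorem specRad_pow_le_norm_pow (K : E →L[ℝ] E) {n : ℕ} (hn : n ≠ 0) :
    specRad K ^ n ≤ ‖K ^ n‖ := by
  obtain ⟨m, rfl⟩ := Nat.exists_eq_succ_of_ne_zero hn
  have hle : specRad K ≤ ‖K ^ (m + 1)‖ ^ (1 / (m + 1) : ℝ) :=
    ciInf_le ⟨0, Set.forall_mem_range.2 fun _ => by positivity⟩ m
  calc specRad K ^ (m + 1) ≤ (‖K ^ (m + 1)‖ ^ (1 / (m + 1) : ℝ)) ^ (m + 1) :=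
        pow_le_pow_left₀ (specRad_nonneg K) hle _
    _ = ‖K ^ (m + 1)‖ := by
        simpa using Real.rpow_inv_natCast_pow (norm_nonneg (K ^ (m + 1))) m.succ_ne_zero

theorem exists_norm_pow_le_of_specRad_lt {R : ℝ} (hR : specRad K < R) :
    ∃ M, 0 ≤ M ∧ ∀ n : ℕ, ‖K ^ n‖ ≤ M * R ^ n := by
  obtain ⟨m, hm⟩ := exists_lt_of_ciInf_lt hR
  refine exists_norm_pow_le_const_mul_pow ((specRad_nonneg K).trans_lt hR) m.succ_ne_zero ?_
  calc ‖K ^ (m + 1)‖ = (‖K ^ (m + 1)‖ ^ (1 / (m + 1) : ℝ)) ^ (m + 1) := by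
        simpa using (Real.rpow_inv_natCast_pow (norm_nonneg (K ^ (m + 1))) m.succ_ne_zero).symm
    _ ≤ R ^ (m + 1) := by gcongr

theorem eventually_norm_pow_apply_le_pow {R : ℝ} (hR : specRad K < R) (h : E) :
    ∀ᶠ n : ℕ in atTop, ‖(K ^ n) h‖ ≤ R ^ n := by
  obtain ⟨R', hKR', hR'R⟩ := exists_between hR
  obtain ⟨M, -, hM⟩ := exists_norm_pow_le_of_specRad_lt hKR'
  have hR' : 0 ≤ R' := (specRad_nonneg K).trans hKR'.le
  filter_upwards [eventually_const_mul_pow_lt_pow (M * ‖h‖) hR' hR'R] with n hn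
  calc ‖(K ^ n) h‖ ≤ M * R' ^ n * ‖h‖ := (K ^ n).le_of_opNorm_le (hM n) h
    _ = M * ‖h‖ * R' ^ n := by ring
    _ ≤ R ^ n := hn.le

theorem norm_pow_add_le_of_norm_pow_succ_le {C M R s : ℝ} (hC : 0 ≤ C) (hM : 0 ≤ M) (hs : 0 ≤ s)
    (hsR : s < R) (hMR : ∀ n : ℕ, ‖K ^ n‖ ≤ M * R ^ n)
    (hrec : ∀ n : ℕ, ‖K ^ (n + 1)‖ ≤ C * ‖(K ^ n) h‖ + s * ‖K ^ n‖) (n k : ℕ) :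
    ‖K ^ (n + k)‖ ≤ C * M / (R - s) * R ^ k * ‖(K ^ n) h‖ + s ^ k * ‖K ^ n‖ := by
  have hRs : 0 < R - s := sub_pos.2 hsR
  have : 0 < R := hs.trans_lt hsR
  set D := C * M / (R - s) with hD
  have hD_eq : C * M + s * D = R * D := by
    rw [hD]
    field_simp
    ring
  induction k with
  | zero =>
    have : 0 ≤ D * ‖(K ^ n) h‖ := by positivity
    simpa using this
  | succ k ih =>
    have happly : ‖(K ^ (n + k)) h‖ ≤ M * R ^ k * ‖(K ^ n) h‖ := by
      rw [add_comm, pow_add]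
      exact (K ^ k).le_of_opNorm_le (hMR k) _
    calc ‖K ^ (n + k + 1)‖ ≤ C * ‖(K ^ (n + k)) h‖ + s * ‖K ^ (n + k)‖ := hrec (n + k)
      _ ≤ C * (M * R ^ k * ‖(K ^ n) h‖)
          + s * (D * R ^ k * ‖(K ^ n) h‖ + s ^ k * ‖K ^ n‖) := by gcongr
      _ = (C * M + s * D) * R ^ k * ‖(K ^ n) h‖ + s ^ (k + 1) * ‖K ^ n‖ := by ring
      _ = D * R ^ (k + 1) * ‖(K ^ n) h‖ + s ^ (k + 1) * ‖K ^ n‖ := by rw [hD_eq]; ring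

theorem eventually_pow_le_norm_pow_apply {C s : ℝ} (hC : 0 ≤ C) (hs : 0 < s) (hsK : s < specRad K)
    (hrec : ∀ n : ℕ, ‖K ^ (n + 1)‖ ≤ C * ‖(K ^ n) h‖ + s * ‖K ^ n‖) :
    ∀ᶠ n : ℕ in atTop, s ^ n ≤ ‖(K ^ n) h‖ := by
  have hK : 0 < specRad K := hs.trans hsK
  obtain ⟨R, hKR, hR⟩ : ∃ R, specRad K < R ∧ R < specRad K ^ 2 / s :=
    exists_between (by rw [lt_div_iff₀ hs]; nlinarith)
  have hRs : R * s < specRad K ^ 2 := (lt_div_iff₀ hs).1 hR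
  have hR_pos : 0 < R := hK.trans hKR
  have hRs_pos : 0 < R - s := sub_pos.2 (hsK.trans hKR)
  obtain ⟨M, hM, hMR⟩ := exists_norm_pow_le_of_specRad_lt hKR
  set D := C * M / (R - s)
  filter_upwards [eventually_const_mul_pow_lt_pow (D + M) (by positivity) hRs,
    eventually_ne_atTop 0] with n hn hn0
  by_contra! hlt
  refine hn.not_ge ?_
  calc (specRad K ^ 2) ^ n = specRad K ^ (n + n) := by rw [← pow_mul, two_mul]
    _ ≤ ‖K ^ (n + n)‖ := specRad_pow_le_norm_pow K (by lia)
    _ ≤ D * R ^ n * ‖(K ^ n) h‖ + s ^ n * ‖K ^ n‖ :=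
        norm_pow_add_le_of_norm_pow_succ_le hC hM hs.le (hsK.trans hKR) hMR hrec n n
    _ ≤ D * R ^ n * s ^ n + s ^ n * (M * R ^ n) := by gcongr; exact hMR n
    _ = (D + M) * (R * s) ^ n := by rw [mul_pow]; ring

theorem tendsto_norm_pow_apply_rpow_one_div
    (hrec : ∀ s : ℝ, 0 < s → ∃ C : ℝ, 0 ≤ C ∧
      ∀ n : ℕ, ‖K ^ (n + 1)‖ ≤ C * ‖(K ^ n) h‖ + s * ‖K ^ n‖) :
    Tendsto (fun n : ℕ => ‖(K ^ n) h‖ ^ (1 / n : ℝ)) atTop (𝓝 (specRad K)) := by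
  refine tendsto_rpow_one_div_of_eventually_pow_le (fun _ => norm_nonneg _) (specRad_nonneg K)
    (fun s hs hsK => ?_) fun R hR => eventually_norm_pow_apply_le_pow hR h
  obtain ⟨C, hC, hrec⟩ := hrec s hs
  exact eventually_pow_le_norm_pow_apply hC hs hsK hrec

end SpectralRadius

section AlmostOrderBounded

variable {E F : Type*} [NormedAddCommGroup E] [Lattice E]

/-- The set `s` is almost order bounded by `h`: up to an arbitrarily small error in norm, it lies in
a multiple of the order interval `[-h, h]`. For the image of the unit ball under an operator, this
says that the operator is semicompact, with order bounds that are multiples of `h`. Natural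
multiples are enough in a real normed lattice and spare an assumption relating the order to real
scalars. -/
def AlmostOrderBoundedBy (h : E) (s : Set E) : Prop :=
  ∀ ε : ℝ, 0 < ε → ∃ N : ℕ, ∀ y ∈ s, ∃ g, |g| ≤ N • h ∧ ‖y - g‖ ≤ ε

/-- `h` is a quasi-interior point of the positive cone: the order ideal that it generates is dense.
As in `AlmostOrderBoundedBy`, the ideal is described with natural multiples of `h`. -/
structure IsQuasiInteriorPoint (h : E) : Prop where
  nonneg : 0 ≤ h
  dense : Dense {g : E | ∃ N : ℕ, |g| ≤ N • h}

theorem IsQuasiInteriorPoint.almostOrderBoundedBy [IsOrderedAddMonoid E] {h : E} {s : Set E}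
    (hh : IsQuasiInteriorPoint h) (hs : TotallyBounded s) : AlmostOrderBoundedBy h s := by
  intro ε hε
  obtain ⟨t, ht, hst⟩ := Metric.totallyBounded_iff.1 hs (ε / 2) (half_pos hε)
  choose g hg hdist using fun y => hh.dense.exists_dist_lt y (half_pos hε)
  choose N hN using hg
  refine ⟨ht.toFinset.sup N, fun y hy => ?_⟩
  obtain ⟨z, hz, hyz⟩ := Set.mem_iUnion₂.1 (hst hy)
  refine ⟨g z, (hN z).trans ?_, ?_⟩
  · exact nsmul_le_nsmul_left hh.nonneg (Finset.le_sup (ht.mem_toFinset.2 hz))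
  · rw [← dist_eq_norm]
    linarith [dist_triangle y z (g z), Metric.mem_ball.1 hyz, hdist z]

theorem abs_map_le_map_of_abs_le {G H 𝓕 : Type*} [AddGroup G] [Lattice G] [AddGroup H] [Lattice H]
    [FunLike 𝓕 G H] [AddMonoidHomClass 𝓕 G H] {T : 𝓕} (hT : Monotone T) {g u : G}
    (hgu : |g| ≤ u) : |T g| ≤ T u :=
  sup_le (hT (le_sup_left.trans hgu)) (map_neg T g ▸ hT (le_sup_right.trans hgu))

variable [NormedAddCommGroup F] [Lattice F] [HasSolidNorm F]

theorem norm_map_le_mul_norm_map_of_abs_le {G 𝓕 : Type*} [AddGroup G] [Lattice G]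
    [FunLike 𝓕 G F] [AddMonoidHomClass 𝓕 G F] {T : 𝓕} (hT : Monotone T) {g h : G} {N : ℕ}
    (hg : |g| ≤ N • h) : ‖T g‖ ≤ N * ‖T h‖ :=
  calc ‖T g‖ ≤ ‖T (N • h)‖ :=
        norm_le_norm_of_abs_le_abs ((abs_map_le_map_of_abs_le hT hg).trans (le_abs_self _))
    _ = ‖N • T h‖ := by rw [map_nsmul]
    _ ≤ N * ‖T h‖ := norm_nsmul_le

theorem AlmostOrderBoundedBy.exists_norm_comp_le {G : Type*} [NormedAddCommGroup G]
    [NormedSpace ℝ G] [NormedSpace ℝ E] [NormedSpace ℝ F] {K : G →L[ℝ] E} {h : E}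
    (hK : AlmostOrderBoundedBy h (K '' Metric.closedBall 0 1)) {ε : ℝ} (hε : 0 < ε) :
    ∃ N : ℕ, ∀ T : E →L[ℝ] F, Monotone T → ‖T ∘L K‖ ≤ N * ‖T h‖ + ε * ‖T‖ := by
  obtain ⟨N, hN⟩ := hK ε hε
  refine ⟨N, fun T hT => ContinuousLinearMap.opNorm_le_of_unit_norm (by positivity) fun f hf => ?_⟩
  obtain ⟨g, hg, hKg⟩ := hN (K f) ⟨f, by simp [hf], rfl⟩
  calc ‖T (K f)‖ = ‖T g + T (K f - g)‖ := by rw [← map_add, add_sub_cancel]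
    _ ≤ ‖T g‖ + ‖T (K f - g)‖ := norm_add_le _ _
    _ ≤ N * ‖T h‖ + ε * ‖T‖ :=
        add_le_add (norm_map_le_mul_norm_map_of_abs_le hT hg)
          ((T.le_opNorm_of_le hKg).trans_eq (mul_comm _ _))

end AlmostOrderBounded

theorem abs_inf_sup_neg_le {G : Type*} [AddCommGroup G] [Lattice G] [IsOrderedAddMonoid G] {u : G}
    (hu : 0 ≤ u) (g : G) : |g ⊓ u ⊔ -u| ≤ |g| ⊓ u := by
  have hneg : -u ≤ 0 := neg_nonpos.2 hu
  have habs : -u ≤ |g| := hneg.trans (abs_nonneg g)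
  refine sup_le ?_ ?_
  · exact sup_le (inf_le_inf_right u (le_abs_self g)) (le_inf habs (hneg.trans hu))
  · rw [neg_sup, neg_neg, neg_inf]
    exact inf_le_inf_right u (sup_le (neg_le_abs g) habs)

section Lp

variable {α E : Type*} {_ : MeasurableSpace α} {μ : Measure α} [NormedAddCommGroup E] {p : ℝ≥0∞}

theorem tendsto_Lp_of_dominated [Fact (1 ≤ p)] (hp : p ≠ ⊤) {f : ℕ → Lp E p μ} {g : Lp E p μ}
    {bound : α → ℝ} (hbound : MemLp bound p μ) (hf : ∀ n, ∀ᵐ x ∂μ, ‖f n x‖ ≤ bound x)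
    (hlim : ∀ᵐ x ∂μ, Tendsto (fun n => f n x) atTop (𝓝 (g x))) : Tendsto f atTop (𝓝 g) := by
  have hindicator (n : ℕ) (s : Set α) :
      eLpNorm (s.indicator (f n)) p μ ≤ eLpNorm (s.indicator bound) p μ := by
    refine eLpNorm_mono_ae_real ?_
    filter_upwards [hf n] with x hx
    rw [norm_indicator_eq_indicator_norm]
    exact Set.indicator_le_indicator hx
  have hUI : UnifIntegrable (fun n => f n) p μ := by
    intro ε hε
    obtain ⟨δ, hδ, hle⟩ := unifIntegrable_const (ι := ℕ) Fact.out hp hbound hε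
    exact ⟨δ, hδ, fun n s hs hμs => (hindicator n s).trans (hle n s hs hμs)⟩
  have hUT : UnifTight (fun n => f n) p μ := by
    intro ε hε
    obtain ⟨s, hs, hle⟩ := unifTight_const (ι := ℕ) hp hbound hε
    exact ⟨s, hs, fun n => (hindicator n sᶜ).trans (hle n)⟩
  exact (Lp.tendsto_Lp_iff_tendsto_eLpNorm' f g).2 <|
    tendsto_Lp_of_tendsto_ae Fact.out hp (fun n => Lp.aestronglyMeasurable (f n)) (Lp.memLp g)
      hUI hUT hlim

theorem isQuasiInteriorPoint_of_ae_pos [Fact (1 ≤ p)] (hp : p ≠ ⊤) {h : Lp ℝ p μ}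
    (hh : ∀ᵐ x ∂μ, 0 < h x) : IsQuasiInteriorPoint h := by
  have h_nonneg : 0 ≤ h := (Lp.coeFn_nonneg h).1 (hh.mono fun _ => le_of_lt)
  refine ⟨h_nonneg, fun g => ?_⟩
  let f : ℕ → Lp ℝ p μ := fun n => g ⊓ n • h ⊔ -(n • h)
  have hf_abs (n : ℕ) : |f n| ≤ |g| ⊓ n • h := abs_inf_sup_neg_le (nsmul_nonneg h_nonneg n) g
  have hf_norm (n : ℕ) : ∀ᵐ x ∂μ, ‖f n x‖ ≤ ‖g x‖ := by
    filter_upwards [(Lp.coeFn_le _ _).2 ((hf_abs n).trans inf_le_left), Lp.coeFn_abs (f n),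
      Lp.coeFn_abs g] with x hx hfx hgx
    rwa [hfx, hgx] at hx
  have hf_coe : ∀ᵐ x ∂μ, ∀ n : ℕ, f n x = g x ⊓ n * h x ⊔ -(n * h x) := by
    refine ae_all_iff.2 fun n => ?_
    filter_upwards [Lp.coeFn_sup (g ⊓ n • h) (-(n • h)), Lp.coeFn_inf g (n • h),
      Lp.coeFn_neg (n • h), Lp.coeFn_smul (n : ℝ) h] with x hsup hinf hneg hsmul
    rw [Nat.cast_smul_eq_nsmul] at hsmul
    simp only [f, hsup, Pi.sup_apply, hinf, Pi.inf_apply, hneg, Pi.neg_apply, hsmul, Pi.smul_apply,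
      smul_eq_mul]
  have hf_lim : ∀ᵐ x ∂μ, Tendsto (fun n => f n x) atTop (𝓝 (g x)) := by
    filter_upwards [hh, hf_coe] with x hx hfx
    refine tendsto_const_nhds.congr' ?_
    obtain ⟨N, hN⟩ := exists_nat_ge (|g x| / h x)
    filter_upwards [eventually_ge_atTop N] with n hn
    have hgn : |g x| ≤ n * h x := by
      rw [← div_le_iff₀ hx]
      exact hN.trans (Nat.cast_le.2 hn)
    rw [hfx, inf_eq_left.2 (abs_le.1 hgn).2, sup_eq_left.2 (abs_le.1 hgn).1]
  exact mem_closure_of_tendsto (tendsto_Lp_of_dominated hp (Lp.memLp g).norm hf_norm hf_lim)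
    (.of_forall fun n => ⟨n, (hf_abs n).trans inf_le_right⟩)

end Lp

theorem local_spectral_radius_eq_general {E : Type*} [NormedAddCommGroup E] [NormedSpace ℝ E]
    [Lattice E] [HasSolidNorm E] {K : E →L[ℝ] E} (hK_mono : Monotone K) {h : E}
    (hK : AlmostOrderBoundedBy h (K '' Metric.closedBall 0 1)) :
    locSpecRad K h = specRad K ∧
      Tendsto (fun n : ℕ => ‖(K ^ n) h‖ ^ (1 / n : ℝ)) atTop (𝓝 (specRad K)) := by
  have hlim := tendsto_norm_pow_apply_rpow_one_div (K := K) (h := h) fun s hs => by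
    obtain ⟨N, hN⟩ := hK.exists_norm_comp_le (F := E) hs
    refine ⟨N, N.cast_nonneg, fun n => ?_⟩
    rw [pow_succ]
    exact hN (K ^ n) (by simpa using hK_mono.iterate n)
  exact ⟨hlim.limsup_eq, hlim⟩

/-- **Zabreiko–Krasnosel'skii–Stetsenko–Zima local spectral radius theorem.**
Let `(X, F, π)` be a probability space, `p ∈ [1, ∞)`, and `K` a positive
compact bounded linear operator on `L_p(X, π)`.  If `h ∈ L_p(X, π)` satisfies
`h(x) > 0` for `π`-almost every `x`, then the local spectral radius of `K` at
`h` satisfies `ρ(K, h) = lim_n ‖K^n h‖_p^(1/n) = ρ(K)`; in particular this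
limit exists. -/
theorem local_spectral_radius_eq
    {X : Type*} [MeasurableSpace X] (π : Measure X) [IsProbabilityMeasure π]
    (p : ℝ≥0∞) [Fact (1 ≤ p)] (hp_top : p ≠ ⊤)
    (K : Lp ℝ p π →L[ℝ] Lp ℝ p π)
    (hK_pos : ∀ g : Lp ℝ p π, (∀ᵐ x ∂π, 0 ≤ g x) → ∀ᵐ x ∂π, 0 ≤ (K g : X → ℝ) x)
    (hK_compact : IsCompactOperator ⇑K)
    (h : Lp ℝ p π) (hh : ∀ᵐ x ∂π, 0 < h x) :
    locSpecRad K h = specRad K ∧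
      Tendsto (fun n : ℕ => ‖(K ^ n) h‖ ^ (1 / n : ℝ)) atTop (𝓝 (specRad K)) := by
  have hK_mono : Monotone K := (monotone_iff_map_nonneg K).2 fun g hg =>
    (Lp.coeFn_nonneg _).1 (hK_pos g ((Lp.coeFn_nonneg g).2 hg))
  have hK_ball : TotallyBounded (K '' Metric.closedBall 0 1) :=
    (hK_compact.isCompact_closure_image_closedBall (f := K.toLinearMap) 1).totallyBounded.subset
      subset_closure
  exact local_spectral_radius_eq_general hK_mono
    ((isQuasiInteriorPoint_of_ae_pos hp_top hh).almostOrderBoundedBy hK_ball)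
end

section
/- Suppose K is a positive compact bounded linear operator on L_p(X,π), h ∈ L_p(X,π) satisfies h(x) > 0 for π-almost every x, and there is δ > 0 such that Kh ≤ δ h π-almost everywhere. Then ρ(K) ≤ δ. -/
open MeasureTheory Filter Topology ENNReal

/-!
After rescaling, `K h ≤ h`. Positivity then gives `|Kⁿ g| ≤ m h` for every `n` as soon as
`|g| ≤ m h`, so all orbits starting in the principal ideal of `h` are bounded, and this ideal is
dense. For a compact operator, bounded orbits on a dense set already make the powers uniformly
bounded: finitely many points of the dense set approximate the image of the unit ball up to `1/2`,
hence `‖Kⁿ⁺¹‖ ≤ C + ‖Kⁿ‖ / 2`. A power-bounded operator has spectral radius at most `1`.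
-/

section SpecRad

variable {E : Type*} [NormedAddCommGroup E] [NormedSpace ℝ E]

theorem specRad_le_norm_pow_rpow (K : E →L[ℝ] E) (n : ℕ) :
    specRad K ≤ ‖K ^ (n + 1)‖ ^ (1 / (n + 1) : ℝ) :=
  ciInf_le ⟨0, by rintro _ ⟨n, rfl⟩; positivity⟩ n

theorem specRad_smul (c : ℝ) (K : E →L[ℝ] E) : specRad (c • K) = |c| * specRad K := by
  rw [specRad, specRad, Real.mul_iInf_of_nonneg (abs_nonneg c)]
  congr 1 with n
  rw [smul_pow, norm_smul, norm_pow, Real.norm_eq_abs,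
    Real.mul_rpow (by positivity) (norm_nonneg _), one_div, ← Nat.cast_succ,
    Real.pow_rpow_inv_natCast (abs_nonneg c) n.succ_ne_zero]

theorem specRad_le_one_of_bddAbove_norm_pow {K : E →L[ℝ] E}
    (hK : BddAbove (Set.range fun n : ℕ => ‖K ^ n‖)) : specRad K ≤ 1 := by
  obtain ⟨M, hM_one, hM⟩ := hK.exists_ge 1
  have h_lim : Tendsto (fun n : ℕ => M ^ (1 / (n + 1) : ℝ)) atTop (𝓝 1) := by
    simpa using tendsto_const_nhds.rpow tendsto_one_div_add_atTop_nhds_zero_nat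
      (Or.inl (by positivity : M ≠ 0))
  refine ge_of_tendsto' h_lim fun n => (specRad_le_norm_pow_rpow K n).trans ?_
  gcongr
  exact hM _ ⟨n + 1, rfl⟩

end SpecRad

section CompactOperator

theorem exists_finite_subset_cover_balls_of_dense {X : Type*} [PseudoMetricSpace X] {S D : Set X}
    (hS : IsCompact S) (hD : Dense D) {ε : ℝ} (hε : 0 < ε) :
    ∃ t ⊆ D, t.Finite ∧ S ⊆ ⋃ y ∈ t, Metric.ball y ε :=
  hS.elim_finite_subcover_image (fun _ _ => Metric.isOpen_ball)
    (((Metric.dense_iff_iUnion_ball D).1 hD ε hε).symm ▸ Set.subset_univ S)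

variable {𝕜 E : Type*} [NontriviallyNormedField 𝕜] [NormedAlgebra ℝ 𝕜] [NormedAddCommGroup E]
  [NormedSpace 𝕜 E] {T : E →L[𝕜] E} {D : Set E}

theorem exists_norm_pow_succ_le_add_half (hT : IsCompactOperator T) (hD : Dense D)
    (h_orbit : ∀ g ∈ D, BddAbove (Set.range fun n : ℕ => ‖(T ^ n) g‖)) :
    ∃ C : ℝ, ∀ n : ℕ, ‖T ^ (n + 1)‖ ≤ C + ‖T ^ n‖ / 2 := by
  obtain ⟨t, htD, ht, h_cover⟩ := exists_finite_subset_cover_balls_of_dense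
    (hT.isCompact_closure_image_closedBall (f := (T : E →ₗ[𝕜] E)) 1) hD one_half_pos
  obtain ⟨C, hC_nonneg, hC⟩ :=
    ((ht.bddAbove_biUnion).2 fun y hy => h_orbit y (htD hy)).exists_ge 0
  refine ⟨C, fun n => ContinuousLinearMap.opNorm_le_of_unit_norm (by positivity) fun x hx => ?_⟩
  obtain ⟨y, hy, hxy⟩ := Set.mem_iUnion₂.1 (h_cover (subset_closure ⟨x, by simp [hx], rfl⟩))
  calc ‖(T ^ (n + 1)) x‖ = ‖(T ^ n) y + (T ^ n) (T x - y)‖ := by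
        rw [← map_add, add_sub_cancel, pow_succ, mul_apply_eq_comp]
    _ ≤ ‖(T ^ n) y‖ + ‖(T ^ n) (T x - y)‖ := norm_add_le _ _
    _ ≤ C + ‖T ^ n‖ * (1 / 2) := by
        gcongr
        · exact hC _ (Set.mem_biUnion hy ⟨n, rfl⟩)
        · exact (T ^ n).le_opNorm_of_le (mem_ball_iff_norm.1 hxy).le
    _ = C + ‖T ^ n‖ / 2 := by ring

theorem bddAbove_norm_pow_of_isCompactOperator (hT : IsCompactOperator T) (hD : Dense D)
    (h_orbit : ∀ g ∈ D, BddAbove (Set.range fun n : ℕ => ‖(T ^ n) g‖)) :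
    BddAbove (Set.range fun n : ℕ => ‖T ^ n‖) := by
  obtain ⟨C, hC⟩ := exists_norm_pow_succ_le_add_half hT hD h_orbit
  refine ⟨max (2 * C) ‖T ^ 0‖, ?_⟩
  rintro _ ⟨n, rfl⟩
  induction n with
  | zero => exact le_max_right _ _
  | succ n ih => linarith [hC n, le_max_left (2 * C) ‖T ^ 0‖]

end CompactOperator

section PositiveOperator

theorem abs_map_le_map_abs {E F Φ : Type*} [AddCommGroup E] [Lattice E] [AddCommGroup F]
    [Lattice F] [FunLike Φ E F] [AddMonoidHomClass Φ E F] {T : Φ} (hT : Monotone T) (g : E) :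
    |T g| ≤ T |g| :=
  abs_le'.2 ⟨hT (le_abs_self g), map_neg T g ▸ hT (neg_le_abs g)⟩

theorem abs_iterate_map_le {E Φ : Type*} [AddCommGroup E] [Lattice E] [FunLike Φ E E]
    [AddMonoidHomClass Φ E E] {T : Φ} (hT : Monotone T) {u g : E} (hu : T u ≤ u) (hg : |g| ≤ u)
    (n : ℕ) : |T^[n] g| ≤ u := by
  induction n with
  | zero => exact hg
  | succ n ih =>
    rw [Function.iterate_succ_apply']
    exact (abs_map_le_map_abs hT _).trans ((hT ih).trans hu)

/-- Quasi-interior points of the positive cone: the principal ideal generated by `h` is dense.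
For `0 ≤ h` the natural multiples of `h` describe this ideal; using them instead of all real
multiples excludes `-h` unless the space is trivial. -/
def IsQuasiInterior {E : Type*} [AddCommGroup E] [Lattice E] [TopologicalSpace E] (h : E) : Prop :=
  Dense {g : E | ∃ n : ℕ, |g| ≤ n • h}

variable {E : Type*} [NormedAddCommGroup E] [Lattice E] [HasSolidNorm E] [NormedSpace ℝ E]

theorem bddAbove_norm_pow_apply_of_abs_le {T : E →L[ℝ] E} (hT : Monotone T) {u g : E}
    (hu : T u ≤ u) (hg : |g| ≤ u) : BddAbove (Set.range fun n : ℕ => ‖(T ^ n) g‖) := by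
  refine ⟨‖u‖, ?_⟩
  rintro _ ⟨n, rfl⟩
  have h_abs : |(T ^ n) g| ≤ u := by
    simpa only [FunLike.coe_pow_eq_iterate] using abs_iterate_map_le hT hu hg n
  exact norm_le_norm_of_abs_le_abs (h_abs.trans (le_abs_self u))

variable [IsOrderedAddMonoid E]

theorem specRad_le_one_of_map_le_self {T : E →L[ℝ] E} (hT_mono : Monotone T)
    (hT_compact : IsCompactOperator T) {h : E} (hh : IsQuasiInterior h) (hTh : T h ≤ h) :
    specRad T ≤ 1 := by
  refine specRad_le_one_of_bddAbove_norm_pow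
    (bddAbove_norm_pow_of_isCompactOperator hT_compact hh ?_)
  rintro g ⟨n, hg⟩
  exact bddAbove_norm_pow_apply_of_abs_le hT_mono
    ((map_nsmul T n h).trans_le (nsmul_le_nsmul_right hTh n)) hg

theorem specRad_le_of_dominated_eigenvector_general [PosSMulMono ℝ E] (K : E →L[ℝ] E)
    (hK_pos : ∀ g, 0 ≤ g → 0 ≤ K g) (hK_compact : IsCompactOperator K) {h : E}
    (hh : IsQuasiInterior h) {δ : ℝ} (hδ : 0 < δ) (hdom : K h ≤ δ • h) : specRad K ≤ δ := by
  have hK_mono : Monotone K := (monotone_iff_map_nonneg K).2 hK_pos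
  have h_scaled : specRad (δ⁻¹ • K) ≤ 1 :=
    specRad_le_one_of_map_le_self (hK_mono.const_smul (inv_nonneg.2 hδ.le))
      (hK_compact.smul δ⁻¹) hh ((inv_smul_le_iff_of_pos hδ).2 hdom)
  rwa [specRad_smul, abs_of_pos (inv_pos.2 hδ), inv_mul_le_one₀ hδ] at h_scaled

end PositiveOperator

section Truncation

/-- Truncation of `f` to the order interval `[-a, a]`. -/
def truncation {E : Type*} [Lattice E] [Neg E] (a f : E) : E := (f ⊓ a) ⊔ -a

variable {E : Type*} [AddCommGroup E] [Lattice E] [IsOrderedAddMonoid E] {a f : E}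

theorem abs_truncation_le (ha : 0 ≤ a) (f : E) : |truncation a f| ≤ a :=
  abs_le'.2 ⟨sup_le inf_le_right (neg_le_self ha), neg_le.2 le_sup_right⟩

theorem truncation_eq_self (hf : |f| ≤ a) : truncation a f = f := by
  obtain ⟨h_le, h_neg_le⟩ := abs_le'.1 hf
  rw [truncation, inf_eq_left.2 h_le, sup_eq_left.2 (neg_le.2 h_neg_le)]

theorem abs_truncation_sub_self_le (ha : 0 ≤ a) (f : E) : |truncation a f - f| ≤ |f| := by
  have h_upper : truncation a f ≤ |f| + f :=
    sup_le (inf_le_left.trans (le_add_of_nonneg_left (abs_nonneg f)))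
      ((neg_nonpos.2 ha).trans (neg_le_iff_add_nonneg.1 (neg_le_abs f)))
  have h_lower : f - |f| ≤ truncation a f :=
    (le_inf (sub_le_self f (abs_nonneg f))
      ((sub_nonpos.2 (le_abs_self f)).trans ha)).trans le_sup_left
  exact abs_le'.2 ⟨sub_le_iff_le_add.2 h_upper, by rwa [neg_sub, sub_le_comm]⟩

end Truncation

section Lp

variable {α E : Type*} [MeasurableSpace α] {μ : Measure α} {p : ℝ≥0∞} [NormedAddCommGroup E]

instance lpPosSMulMono {𝕜 : Type*} [NormedRing 𝕜] [PartialOrder 𝕜] [Module 𝕜 E]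
    [IsBoundedSMul 𝕜 E] [PartialOrder E] [PosSMulMono 𝕜 E] : PosSMulMono 𝕜 (Lp E p μ) where
  smul_le_smul_of_nonneg_left c hc f g hfg := by
    rw [← Lp.coeFn_le] at hfg ⊢
    filter_upwards [hfg, Lp.coeFn_smul c f, Lp.coeFn_smul c g] with x hx hf hg
    rw [hf, hg]
    exact smul_le_smul_of_nonneg_left hx hc

theorem tendsto_eLpNorm_zero_of_dominated (hp : p ≠ ⊤) {F : ℕ → α → E} {bound : α → ℝ}
    (hF : ∀ n, AEStronglyMeasurable (F n) μ) (h_memLp : MemLp bound p μ)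
    (h_bound : ∀ n, ∀ᵐ x ∂μ, ‖F n x‖ ≤ bound x)
    (h_lim : ∀ᵐ x ∂μ, Tendsto (fun n => F n x) atTop (𝓝 0)) :
    Tendsto (fun n => eLpNorm (F n) p μ) atTop (𝓝 0) := by
  rcases eq_or_ne p 0 with rfl | hp0
  · simp
  have hp_pos : 0 < p.toReal := ENNReal.toReal_pos hp0 hp
  have h_lintegral : Tendsto (fun n => ∫⁻ x, ‖F n x‖ₑ ^ p.toReal ∂μ) atTop
      (𝓝 (∫⁻ _, 0 ∂μ)) := by
    refine tendsto_lintegral_of_dominated_convergence' (fun x => ‖bound x‖ₑ ^ p.toReal)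
      (fun n => (hF n).enorm.pow_const _) (fun n => ?_)
      (lintegral_rpow_enorm_lt_top_of_eLpNorm_lt_top hp0 hp h_memLp.2).ne ?_
    · filter_upwards [h_bound n] with x hx
      gcongr
      exact enorm_le_iff_norm_le.2 (hx.trans (le_abs_self _))
    · filter_upwards [h_lim] with x hx
      simpa [hp_pos] using hx.enorm.ennrpow_const p.toReal
  simp_rw [eLpNorm_eq_lintegral_rpow_enorm_toReal hp0 hp]
  simpa [hp_pos] using h_lintegral.ennrpow_const (1 / p.toReal)

theorem coeFn_truncation [Lattice E] [HasSolidNorm E] [IsOrderedAddMonoid E] (a f : Lp E p μ) :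
    ⇑(truncation a f) =ᵐ[μ] fun x => truncation (a x) (f x) := by
  filter_upwards [Lp.coeFn_sup (f ⊓ a) (-a), Lp.coeFn_inf f a, Lp.coeFn_neg a]
    with x h_sup h_inf h_neg
  simp only [truncation, h_sup, h_inf, h_neg, Pi.sup_apply, Pi.inf_apply, Pi.neg_apply]

theorem tendsto_truncation_nsmul [Fact (1 ≤ p)] (hp : p ≠ ⊤) {h : Lp ℝ p μ}
    (hh : ∀ᵐ x ∂μ, 0 < h x) (f : Lp ℝ p μ) :
    Tendsto (fun n : ℕ => truncation (n • h) f) atTop (𝓝 f) := by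
  have h_coe : ∀ᵐ x ∂μ, ∀ n : ℕ, truncation (n • h) f x = truncation (n * h x) (f x) := by
    refine ae_all_iff.2 fun n => ?_
    rw [← Nat.cast_smul_eq_nsmul ℝ]
    filter_upwards [coeFn_truncation ((n : ℝ) • h) f, Lp.coeFn_smul (n : ℝ) h] with x hx h_smul
    rw [hx, h_smul, Pi.smul_apply, smul_eq_mul]
  refine (Lp.tendsto_Lp_iff_tendsto_eLpNorm' _ _).2 (tendsto_eLpNorm_zero_of_dominated hp
    (fun n => (Lp.aestronglyMeasurable _).sub (Lp.aestronglyMeasurable f))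
    (Lp.memLp f).norm (fun n => ?_) ?_)
  · filter_upwards [h_coe, hh] with x hx h_pos
    rw [Pi.sub_apply, hx]
    exact abs_truncation_sub_self_le (by positivity) (f x)
  · filter_upwards [h_coe, hh] with x hx h_pos
    obtain ⟨N, hN⟩ := Archimedean.arch |f x| h_pos
    refine tendsto_const_nhds.congr' ?_
    filter_upwards [eventually_ge_atTop N] with n hn
    have h_le : |f x| ≤ n * h x :=
      hN.trans (by rw [nsmul_eq_mul]; gcongr)
    rw [Pi.sub_apply, hx, truncation_eq_self h_le, sub_self]

theorem isQuasiInterior_of_ae_pos [Fact (1 ≤ p)] (hp : p ≠ ⊤) {h : Lp ℝ p μ}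
    (hh : ∀ᵐ x ∂μ, 0 < h x) : IsQuasiInterior h := fun f =>
  have h_nonneg : 0 ≤ h := (Lp.coeFn_nonneg h).1 (hh.mono fun _ => le_of_lt)
  mem_closure_of_tendsto (tendsto_truncation_nsmul hp hh f)
    (.of_forall fun n => ⟨n, abs_truncation_le (nsmul_nonneg h_nonneg n) f⟩)

theorem le_smul_of_ae_le_mul {c : ℝ} {f g : Lp ℝ p μ} (hfg : ∀ᵐ x ∂μ, f x ≤ c * g x) :
    f ≤ c • g := by
  rw [← Lp.coeFn_le]
  filter_upwards [hfg, Lp.coeFn_smul c g] with x hx h_smul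
  rwa [h_smul]

end Lp

/-- **Krasnosel'skii-type spectral bound.**  Let `(X, F, π)` be a probability
space, `p ∈ [1, ∞)`, and `K` a positive compact bounded linear operator on
`L_p(X,π)`.  If `h ∈ L_p(X,π)` is π-a.e. strictly positive (a quasi-interior
point of the positive cone) and `K h ≤ δ h` π-a.e. for some `δ > 0`, then
`ρ(K) ≤ δ`. -/
theorem specRad_le_of_dominated_eigenvector
    {X : Type*} [MeasurableSpace X] (π : Measure X) [IsProbabilityMeasure π]
    (p : ℝ≥0∞) [Fact (1 ≤ p)] (hp_top : p ≠ ⊤)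
    (K : Lp ℝ p π →L[ℝ] Lp ℝ p π)
    (hK_pos : ∀ g : Lp ℝ p π, (∀ᵐ x ∂π, 0 ≤ g x) → ∀ᵐ x ∂π, 0 ≤ (K g : X → ℝ) x)
    (hK_compact : IsCompactOperator ⇑K)
    (h : Lp ℝ p π) (hh : ∀ᵐ x ∂π, 0 < h x)
    (δ : ℝ) (hδ : 0 < δ)
    (hdom : ∀ᵐ x ∂π, (K h : X → ℝ) x ≤ δ * h x) :
    specRad K ≤ δ :=
  specRad_le_of_dominated_eigenvector_general K
    (fun g hg => (Lp.coeFn_nonneg _).1 (hK_pos g ((Lp.coeFn_nonneg g).2 hg)))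
    hK_compact (isQuasiInterior_of_ae_pos hp_top hh) hδ (le_smul_of_ae_le_mul hdom)
end

section
/- Let K be a bounded linear operator on a real Banach space E and let N ⊆ E. Then sup{ ρ(K,h) : h ∈ N } = sup{ ρ(K,h) : h ∈ M }, where M = span{ K^m h : h ∈ N, m ≥ 0 } is the linear span of the K-orbit of N. -/
open Filter Topology

/-! The sublevel sets of `ρ(K, ·)` are compared with the spaces `{x | ‖K ^ n x‖ = O(r ^ n)}`. By the
root test, `ρ(K, x) < r` implies `‖K ^ n x‖ = O(r ^ n)`, which in turn implies `ρ(K, x) ≤ r`. The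
growth condition is linear in `x` and stable under `K`, so if it holds on `N` it holds on the whole
span of the orbit of `N`. Letting `r` decrease to the supremum over `N` gives the nontrivial
inequality. -/

open Asymptotics

section RootTest

variable {F : Type*} [SeminormedAddCommGroup F] {u : ℕ → F} {r : ℝ}

theorem exists_eventually_root_norm_le_of_isBigO_pow (h : u =O[atTop] fun n ↦ r ^ n) :
    ∃ C > 0, ∀ᶠ n : ℕ in atTop, ‖u n‖ ^ (1 / n : ℝ) ≤ C ^ (1 / n : ℝ) * |r| := by
  obtain ⟨C, hC, hbound⟩ := h.exists_pos
  refine ⟨C, hC, ?_⟩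
  filter_upwards [hbound.bound, eventually_ne_atTop 0] with n hn hn0
  rw [norm_pow, Real.norm_eq_abs] at hn
  calc ‖u n‖ ^ (1 / n : ℝ) ≤ (C * |r| ^ n) ^ (1 / n : ℝ) := by gcongr
    _ = C ^ (1 / n : ℝ) * |r| := by
      rw [Real.mul_rpow hC.le (by positivity), one_div,
        Real.pow_rpow_inv_natCast (abs_nonneg r) hn0]

theorem tendsto_const_root_mul {C : ℝ} (hC : 0 < C) (r : ℝ) :
    Tendsto (fun n : ℕ ↦ C ^ (1 / n : ℝ) * r) atTop (𝓝 r) := by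
  have hroot : Tendsto (fun n : ℕ ↦ C ^ (1 / n : ℝ)) atTop (𝓝 (C ^ (0 : ℝ))) :=
    tendsto_const_nhds.rpow tendsto_one_div_atTop_nhds_zero_nat (.inl hC.ne')
  simpa only [Real.rpow_zero, one_mul] using hroot.mul_const r

theorem isBoundedUnder_root_norm_of_isBigO_pow (h : u =O[atTop] fun n ↦ r ^ n) :
    IsBoundedUnder (· ≤ ·) atTop fun n : ℕ ↦ ‖u n‖ ^ (1 / n : ℝ) := by
  obtain ⟨C, hC, hle⟩ := exists_eventually_root_norm_le_of_isBigO_pow h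
  exact (tendsto_const_root_mul hC |r|).isBoundedUnder_le.mono_le hle

theorem limsup_root_norm_le_of_isBigO_pow (h : u =O[atTop] fun n ↦ r ^ n) :
    limsup (fun n : ℕ ↦ ‖u n‖ ^ (1 / n : ℝ)) atTop ≤ |r| := by
  obtain ⟨C, hC, hle⟩ := exists_eventually_root_norm_le_of_isBigO_pow h
  have hlim := tendsto_const_root_mul hC |r|
  have hcobdd : IsCoboundedUnder (· ≤ ·) atTop fun n : ℕ ↦ ‖u n‖ ^ (1 / n : ℝ) :=
    isCoboundedUnder_le_of_le atTop (x := 0) fun n ↦ by positivity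
  exact (limsup_le_limsup hle hcobdd hlim.isBoundedUnder_le).trans_eq hlim.limsup_eq

theorem isBigO_pow_of_limsup_root_norm_lt
    (hbdd : IsBoundedUnder (· ≤ ·) atTop fun n : ℕ ↦ ‖u n‖ ^ (1 / n : ℝ))
    (h : limsup (fun n : ℕ ↦ ‖u n‖ ^ (1 / n : ℝ)) atTop < r) :
    u =O[atTop] fun n ↦ r ^ n := by
  refine .of_norm_eventuallyLE ?_
  filter_upwards [eventually_lt_of_limsup_lt h hbdd, eventually_ne_atTop 0] with n hn hn0
  calc ‖u n‖ = (‖u n‖ ^ (1 / n : ℝ)) ^ n := by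
        rw [one_div, Real.rpow_inv_natCast_pow (norm_nonneg _) hn0]
    _ ≤ r ^ n := by gcongr

end RootTest

section Growth

variable {𝕜 E : Type*} [NormedField 𝕜] [SeminormedAddCommGroup E] [NormedSpace 𝕜 E]
  {K : E →L[𝕜] E} {r : ℝ} {x : E}

/-- The vectors whose orbit under `K` grows at most like the geometric sequence `r ^ n`. For `r > 0`
it contains every `x` with `ρ(K, x) < r`, and every vector in it satisfies `ρ(K, x) ≤ r`; unlike
these sublevel sets of `ρ(K, ·)`, it is visibly a subspace. -/
def growthSubmodule (K : E →L[𝕜] E) (r : ℝ) : Submodule 𝕜 E where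
  carrier := {x | (fun n ↦ (K ^ n) x) =O[atTop] fun n ↦ r ^ n}
  zero_mem' := by simpa using isBigO_zero _ _
  add_mem' hx hy := by simpa using hx.add hy
  smul_mem' c x hx := by
    simpa only [Set.mem_ofPred_eq, map_smul, Pi.smul_def] using hx.const_smul_left c

theorem mem_growthSubmodule :
    x ∈ growthSubmodule K r ↔ (fun n ↦ (K ^ n) x) =O[atTop] fun n ↦ r ^ n :=
  Iff.rfl

theorem pow_apply_mem_growthSubmodule (hx : x ∈ growthSubmodule K r) (m : ℕ) :
    (K ^ m) x ∈ growthSubmodule K r := by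
  have hshift : (fun n ↦ (K ^ (n + m)) x) =O[atTop] fun n ↦ r ^ (n + m) :=
    hx.comp_tendsto (tendsto_add_atTop_nat m)
  have hscale : (fun n : ℕ ↦ r ^ (n + m)) =O[atTop] fun n ↦ r ^ n := by
    simpa only [pow_add, mul_comm (r ^ m)] using (isBigO_refl (r ^ ·) atTop).const_mul_left (r ^ m)
  simpa only [mem_growthSubmodule, pow_add, mul_apply_eq_comp] using hshift.trans hscale

end Growth

section OpNorm

variable {𝕜 E : Type*} [NontriviallyNormedField 𝕜] [SeminormedAddCommGroup E] [NormedSpace 𝕜 E]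

theorem mem_growthSubmodule_opNorm (K : E →L[𝕜] E) (x : E) : x ∈ growthSubmodule K ‖K‖ := by
  refine .of_bound ‖x‖ ?_
  filter_upwards [eventually_gt_atTop 0] with n hn
  calc ‖(K ^ n) x‖ ≤ ‖K ^ n‖ * ‖x‖ := (K ^ n).le_opNorm x
    _ ≤ ‖K‖ ^ n * ‖x‖ := by gcongr; exact norm_pow_le' K hn
    _ = ‖x‖ * ‖‖K‖ ^ n‖ := by rw [norm_pow, norm_norm, mul_comm]

theorem isBoundedUnder_root_norm_pow_apply (K : E →L[𝕜] E) (x : E) :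
    IsBoundedUnder (· ≤ ·) atTop fun n : ℕ ↦ ‖(K ^ n) x‖ ^ (1 / n : ℝ) :=
  isBoundedUnder_root_norm_of_isBigO_pow (mem_growthSubmodule_opNorm K x)

end OpNorm

section LocSpecRad

variable {E : Type*} [NormedAddCommGroup E] [NormedSpace ℝ E] {K : E →L[ℝ] E} {r : ℝ} {x : E}

theorem locSpecRad_le_of_mem_growthSubmodule (hr : 0 ≤ r) (hx : x ∈ growthSubmodule K r) :
    locSpecRad K x ≤ r :=
  (limsup_root_norm_le_of_isBigO_pow hx).trans_eq (abs_of_nonneg hr)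

theorem mem_growthSubmodule_of_locSpecRad_lt (h : locSpecRad K x < r) :
    x ∈ growthSubmodule K r :=
  isBigO_pow_of_limsup_root_norm_lt (isBoundedUnder_root_norm_pow_apply K x) h

theorem locSpecRad_nonneg (K : E →L[ℝ] E) (x : E) : 0 ≤ locSpecRad K x :=
  le_limsup_of_frequently_le (.of_forall fun _ ↦ by positivity)
    (isBoundedUnder_root_norm_pow_apply K x)

theorem bddAbove_locSpecRad_image (K : E →L[ℝ] E) (S : Set E) :
    BddAbove (locSpecRad K '' S) :=
  ⟨‖K‖, Set.forall_mem_image.2 fun x _ ↦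
    locSpecRad_le_of_mem_growthSubmodule (norm_nonneg K) (mem_growthSubmodule_opNorm K x)⟩

theorem locSpecRad_le_of_mem_span_orbit {N : Set E} {s : ℝ} (hs : 0 ≤ s)
    (hN : ∀ h ∈ N, locSpecRad K h ≤ s)
    (hx : x ∈ Submodule.span ℝ {y : E | ∃ h ∈ N, ∃ m : ℕ, y = (K ^ m) h}) :
    locSpecRad K x ≤ s := by
  refine le_of_forall_gt_imp_ge_of_dense fun r hr ↦ ?_
  have hspan : Submodule.span ℝ {y : E | ∃ h ∈ N, ∃ m : ℕ, y = (K ^ m) h} ≤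
      growthSubmodule K r := by
    rw [Submodule.span_le]
    rintro _ ⟨h, hh, m, rfl⟩
    exact pow_apply_mem_growthSubmodule
      (mem_growthSubmodule_of_locSpecRad_lt ((hN h hh).trans_lt hr)) m
  exact locSpecRad_le_of_mem_growthSubmodule (hs.trans hr.le) (hspan hx)

end LocSpecRad

theorem sup_locSpecRad_orbit_span_general
    {E : Type*} [NormedAddCommGroup E] [NormedSpace ℝ E] (K : E →L[ℝ] E) (N : Set E) :
    sSup (locSpecRad K '' N) =
      sSup (locSpecRad K ''
        (Submodule.span ℝ {x : E | ∃ h ∈ N, ∃ m : ℕ, x = (K ^ m) h} : Set E)) := by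
  have sSup_nonneg (S : Set E) : 0 ≤ sSup (locSpecRad K '' S) :=
    Real.sSup_nonneg (Set.forall_mem_image.2 fun h _ ↦ locSpecRad_nonneg K h)
  have le_sSup {S : Set E} {h : E} (hh : h ∈ S) : locSpecRad K h ≤ sSup (locSpecRad K '' S) :=
    le_csSup (bddAbove_locSpecRad_image K S) (Set.mem_image_of_mem _ hh)
  apply le_antisymm
  · refine Real.sSup_le (Set.forall_mem_image.2 fun h hh ↦ le_sSup ?_) (sSup_nonneg _)
    exact Submodule.subset_span ⟨h, hh, 0, by simp⟩
  · exact Real.sSup_le (Set.forall_mem_image.2 fun x hx ↦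
      locSpecRad_le_of_mem_span_orbit (sSup_nonneg N) (fun _ ↦ le_sSup) hx) (sSup_nonneg N)

/-- **Daneš' corollary.**  For a bounded linear operator `K` on a real Banach
space `E` and any `N ⊆ E`, the supremum of the local spectral radii of `K`
over `N` equals the supremum over `M = span { K^m h : h ∈ N, m ≥ 0 }`, the
linear span of the `K`-orbit of `N`. -/
theorem sup_locSpecRad_orbit_span
    {E : Type*} [NormedAddCommGroup E] [NormedSpace ℝ E] [CompleteSpace E]
    (K : E →L[ℝ] E) (N : Set E) :
    sSup (locSpecRad K '' N) =
      sSup (locSpecRad K ''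
        (Submodule.span ℝ {x : E | ∃ h ∈ N, ∃ m : ℕ, x = (K ^ m) h} : Set E)) :=
  sup_locSpecRad_orbit_span_general K N
end
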